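/- Let d ≥ 1 and 0 < r ≤ R. Let e₁ denote the first standard basis vector of ℝ^d and set x̃ := r²/(2R). Then the Lebesgue measure of the intersection of the closed ball of radius r centered at the origin with the closed ball of radius R centered at R·e₁ equals vol(B̄(0,r) ∩ B̄(R·e₁, R)) = ∫_0^{x̃} V_{d−1}(√(2Rx − x²)) dx + ∫_{x̃}^{r} V_{d−1}(√(r² − x²)) dx, where V_{d−1}(t) := π^{(d−1)/2} t^{d−1} / Γ((d+1)/2) is the volume of a (d−1)-dimensional ball of radius t. -/

import Mathlib

open Metric MeasureTheory

/-!
Cut the lens orthogonally to the line through the two centres. At signed distance `x` from the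
centre of the small ball, the slice of each ball is a ball of codimension one about that line, so
the slice of the lens is the smaller of the two, of squared radius `min (2Rx - x²) (r² - x²)`. It is
nonempty exactly for `0 ≤ x ≤ r`, and the minimum changes branch where the two boundary spheres
meet, at `x = r² / (2R)`.
-/

section

open Module Set

/-- The volume `V_n(t)` of an `n`-dimensional Euclidean ball of radius `t`, as an
explicit formula. For `t < 0` the formula is not the volume of a ball. -/
noncomputable def euclideanBallVolume (n : ℕ) (t : ℝ) : ℝ :=
  Real.pi ^ ((n : ℝ) / 2) * t ^ n / Real.Gamma ((n : ℝ) / 2 + 1)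

lemma continuous_euclideanBallVolume (n : ℕ) : Continuous (euclideanBallVolume n) := by
  unfold euclideanBallVolume
  fun_prop

lemma euclideanBallVolume_pred {d : ℕ} (hd : 0 < d) (t : ℝ) :
    euclideanBallVolume (d - 1) t =
      Real.pi ^ (((d : ℝ) - 1) / 2) * t ^ (d - 1) / Real.Gamma (((d : ℝ) + 1) / 2) := by
  rw [euclideanBallVolume, Nat.cast_pred hd]
  ring_nf

/-- The squared radius of the slice at abscissa `x` of the lens cut out by the ball of radius `r`
about the origin and the ball of radius `R` about the point of abscissa `R`. A negative value stands
for an empty slice. -/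
noncomputable def lensProfile (r R x : ℝ) : ℝ :=
  min (2 * R * x - x ^ 2) (r ^ 2 - x ^ 2)

lemma continuous_lensProfile (r R : ℝ) : Continuous (lensProfile r R) := by
  unfold lensProfile
  fun_prop

lemma lensProfile_nonneg_iff {r R : ℝ} (hr : 0 < r) (hrR : r ≤ 2 * R) (x : ℝ) :
    0 ≤ lensProfile r R x ↔ x ∈ Icc 0 r := by
  rw [lensProfile, le_min_iff, sub_nonneg, sub_nonneg]
  constructor
  · rintro ⟨hlarge, hsmall⟩
    exact ⟨nonneg_of_mul_nonneg_right ((sq_nonneg x).trans hlarge) (hr.trans_le hrR),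
      (abs_le_of_sq_le_sq' hsmall hr.le).2⟩
  · rintro ⟨hx0, hxr⟩
    have hlarge : x * x ≤ 2 * R * x := by gcongr; linarith
    exact ⟨by rwa [sq], by gcongr⟩

lemma lensProfile_of_le {r R x : ℝ} (hR : 0 < R) (hx : x ≤ r ^ 2 / (2 * R)) :
    lensProfile r R x = 2 * R * x - x ^ 2 := by
  rw [le_div_iff₀' (by positivity)] at hx
  exact min_eq_left (by linarith)

lemma lensProfile_of_ge {r R x : ℝ} (hR : 0 < R) (hx : r ^ 2 / (2 * R) ≤ x) :
    lensProfile r R x = r ^ 2 - x ^ 2 := by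
  rw [div_le_iff₀' (by positivity)] at hx
  exact min_eq_right (by linarith)

lemma integral_comp_lensProfile {f : ℝ → ℝ} (hf : Continuous f) {r R : ℝ} (hr : 0 < r)
    (hrR : r ≤ 2 * R) :
    ∫ x in (0 : ℝ)..r, f (lensProfile r R x) =
      (∫ x in (0 : ℝ)..(r ^ 2 / (2 * R)), f (2 * R * x - x ^ 2)) +
        ∫ x in (r ^ 2 / (2 * R))..r, f (r ^ 2 - x ^ 2) := by
  have hR : 0 < R := by linarith
  have hx_nonneg : 0 ≤ r ^ 2 / (2 * R) := by positivity
  have hx_le : r ^ 2 / (2 * R) ≤ r := by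
    rw [div_le_iff₀ (by positivity), sq]
    gcongr
  have hint (a b : ℝ) : IntervalIntegrable (fun x => f (lensProfile r R x)) volume a b :=
    (hf.comp (continuous_lensProfile r R)).intervalIntegrable a b
  rw [← intervalIntegral.integral_add_adjacent_intervals (hint 0 (r ^ 2 / (2 * R))) (hint _ r)]
  congr 1 <;> refine intervalIntegral.integral_congr fun x hx => ?_
  · rw [uIcc_of_le hx_nonneg] at hx
    simp only [lensProfile_of_le hR hx.2]
  · rw [uIcc_of_le hx_le] at hx
    simp only [lensProfile_of_ge hR hx.1]

lemma measureReal_closedBall_inter_closedBall_sub {G : Type*} [SeminormedAddCommGroup G]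
    [MeasurableSpace G] [BorelSpace G] (μ : Measure G) [μ.IsAddLeftInvariant] (a b : G) (r R : ℝ) :
    μ.real (closedBall a r ∩ closedBall b R) =
      μ.real (closedBall 0 r ∩ closedBall (b - a) R) := by
  rw [measureReal_def, ← measure_preimage_add μ a, preimage_inter, preimage_add_closedBall,
    preimage_add_closedBall, sub_self, ← measureReal_def]

variable {E : Type*} [NormedAddCommGroup E] [InnerProductSpace ℝ E]

lemma norm_smul_add_orthogonal_sq {u : E} (hu : ‖u‖ = 1) (t : ℝ) (z : (ℝ ∙ u)ᗮ) :
    ‖t • u + (z : E)‖ ^ 2 = t ^ 2 + ‖z‖ ^ 2 := by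
  have horth : inner ℝ (t • u) (z : E) = 0 := by
    rw [real_inner_smul_left, Submodule.mem_orthogonal_singleton_iff_inner_right.mp z.2, mul_zero]
  rw [sq, norm_add_sq_eq_norm_sq_add_norm_sq_real horth, norm_smul, hu, mul_one, ← sq, ← sq,
    Real.norm_eq_abs, sq_abs, Submodule.coe_norm]

lemma smul_add_orthogonal_mem_closedBall_iff {u : E} (hu : ‖u‖ = 1) {ρ : ℝ} (hρ : 0 ≤ ρ)
    (c t : ℝ) (z : (ℝ ∙ u)ᗮ) :
    t • u + (z : E) ∈ closedBall (c • u) ρ ↔ ‖z‖ ^ 2 ≤ ρ ^ 2 - (t - c) ^ 2 := by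
  have hsub : t • u + (z : E) - c • u = (t - c) • u + z := by module
  rw [mem_closedBall_iff_norm, hsub, ← sq_le_sq₀ (norm_nonneg _) hρ,
    norm_smul_add_orthogonal_sq hu, le_sub_iff_add_le']

lemma smul_add_orthogonal_mem_lens_iff {u : E} (hu : ‖u‖ = 1) {r R : ℝ} (hr : 0 ≤ r) (hR : 0 ≤ R)
    (t : ℝ) (z : (ℝ ∙ u)ᗮ) :
    t • u + (z : E) ∈ closedBall 0 r ∩ closedBall (R • u) R ↔ ‖z‖ ^ 2 ≤ lensProfile r R t := by
  have hsmall := smul_add_orthogonal_mem_closedBall_iff hu hr 0 t z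
  rw [zero_smul, sub_zero] at hsmall
  have hlarge : R ^ 2 - (t - R) ^ 2 = 2 * R * t - t ^ 2 := by ring
  rw [mem_inter_iff, hsmall, smul_add_orthogonal_mem_closedBall_iff hu hR, hlarge, lensProfile,
    le_min_iff, and_comm]

variable [FiniteDimensional ℝ E]

lemma finrank_orthogonal_span_singleton_eq_pred {u : E} (hu : u ≠ 0) :
    finrank ℝ (ℝ ∙ u)ᗮ = finrank ℝ E - 1 := by
  have := (ℝ ∙ u).finrank_add_finrank_orthogonal
  rw [finrank_span_singleton hu] at this
  omega

variable [MeasurableSpace E] [BorelSpace E]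

lemma volume_real_closedBall_eq_euclideanBallVolume (x : E) {ρ : ℝ} (hρ : 0 ≤ ρ) :
    volume.real (closedBall x ρ) = euclideanBallVolume (finrank ℝ E) ρ := by
  rcases subsingleton_or_nontrivial E with _ | _
  · have hball : closedBall x ρ = parallelepiped (stdOrthonormalBasis ℝ E) :=
      (nonempty_closedBall.mpr hρ).eq_univ.trans
        (nonempty_of_mem ((mem_parallelepiped_iff _ 0).mpr ⟨0, by simp⟩)).eq_univ.symm
    rw [hball, measureReal_def, OrthonormalBasis.volume_parallelepiped]
    simp [euclideanBallVolume, finrank_zero_of_subsingleton]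
  · have hcoeff : 0 ≤ √Real.pi ^ finrank ℝ E / Real.Gamma ((finrank ℝ E : ℝ) / 2 + 1) :=
      div_nonneg (by positivity) (Real.Gamma_nonneg_of_nonneg (by positivity))
    have hπ : √Real.pi ^ finrank ℝ E = Real.pi ^ ((finrank ℝ E : ℝ) / 2) := by
      rw [Real.sqrt_eq_rpow, ← Real.rpow_mul_natCast Real.pi_pos.le]
      ring_nf
    rw [measureReal_def, InnerProductSpace.volume_closedBall, ENNReal.toReal_mul,
      ENNReal.toReal_pow, ENNReal.toReal_ofReal hρ, ENNReal.toReal_ofReal hcoeff, hπ,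
      euclideanBallVolume]
    ring

lemma volume_real_setOf_norm_sq_le {q : ℝ} (hq : 0 ≤ q) :
    volume.real {x : E | ‖x‖ ^ 2 ≤ q} = euclideanBallVolume (finrank ℝ E) √q := by
  have hball : {x : E | ‖x‖ ^ 2 ≤ q} = closedBall 0 √q := by
    ext x
    simp [Real.le_sqrt (norm_nonneg x) hq]
  rw [hball, volume_real_closedBall_eq_euclideanBallVolume 0 (Real.sqrt_nonneg q)]

lemma measurePreserving_smul_add_orthogonal {u : E} (hu : ‖u‖ = 1) :
    MeasurePreserving fun p : ℝ × (ℝ ∙ u)ᗮ => p.1 • u + (p.2 : E) :=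
  (ℝ ∙ u).orthogonalDecomposition.symm.measurePreserving.comp <|
    (WithLp.volume_preserving_toLp (ℝ ∙ u) (ℝ ∙ u)ᗮ).comp <|
      (LinearIsometryEquiv.toSpanUnitSingleton u hu).measurePreserving.prod (.id volume)

lemma volume_real_eq_integral_slices {u : E} (hu : ‖u‖ = 1) {s : Set E} (hs : MeasurableSet s)
    (hfin : volume s ≠ ⊤) :
    volume.real s = ∫ t : ℝ, volume.real {z : (ℝ ∙ u)ᗮ | t • u + (z : E) ∈ s} := by
  have hmp := measurePreserving_smul_add_orthogonal hu
  have hs' := hmp.measurable hs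
  have hvol := hmp.measure_preimage hs.nullMeasurableSet
  rw [Measure.volume_eq_prod] at hvol
  rw [measureReal_def, ← hvol, Measure.prod_apply hs']
  exact (integral_toReal (measurable_measure_prodMk_left hs').aemeasurable
    (Measure.ae_measure_lt_top hs' (hvol ▸ hfin))).symm

lemma volume_real_solid_of_revolution {u : E} (hu : ‖u‖ = 1) {s : Set E} (hs : MeasurableSet s)
    (hfin : volume s ≠ ⊤) {q : ℝ → ℝ} {a b : ℝ} (hab : a ≤ b)
    (hmem : ∀ (t : ℝ) (z : (ℝ ∙ u)ᗮ), t • u + (z : E) ∈ s ↔ ‖z‖ ^ 2 ≤ q t)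
    (hq : ∀ t, 0 ≤ q t ↔ t ∈ Icc a b) :
    volume.real s = ∫ t in a..b, euclideanBallVolume (finrank ℝ E - 1) √(q t) := by
  have hslice (t : ℝ) : volume.real {z : (ℝ ∙ u)ᗮ | t • u + (z : E) ∈ s} =
      (Icc a b).indicator (fun t => euclideanBallVolume (finrank ℝ E - 1) √(q t)) t := by
    simp only [hmem]
    by_cases ht : t ∈ Icc a b
    · rw [indicator_of_mem ht, volume_real_setOf_norm_sq_le ((hq t).mpr ht),
        finrank_orthogonal_span_singleton_eq_pred (norm_ne_zero_iff.mp (by simp [hu]))]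
    · have hempty : {z : (ℝ ∙ u)ᗮ | ‖z‖ ^ 2 ≤ q t} = ∅ :=
        eq_empty_of_forall_notMem fun z hz => ht ((hq t).mp ((sq_nonneg ‖z‖).trans hz))
      rw [indicator_of_notMem ht, hempty, measureReal_empty]
  simp_rw [volume_real_eq_integral_slices hu hs hfin, hslice]
  rw [integral_indicator measurableSet_Icc, integral_Icc_eq_integral_Ioc,
    intervalIntegral.integral_of_le hab]

theorem lens_volume_slicing_general {a b : E} {r R : ℝ} (hab : dist a b = R) (hr : 0 < r)
    (hrR : r ≤ 2 * R) :
    volume.real (closedBall a r ∩ closedBall b R) =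
      (∫ x in (0 : ℝ)..(r ^ 2 / (2 * R)),
          euclideanBallVolume (finrank ℝ E - 1) √(2 * R * x - x ^ 2)) +
        ∫ x in (r ^ 2 / (2 * R))..r, euclideanBallVolume (finrank ℝ E - 1) √(r ^ 2 - x ^ 2) := by
  have hR : 0 < R := by linarith
  obtain ⟨u, hu, hba⟩ : ∃ u : E, ‖u‖ = 1 ∧ b - a = R • u := by
    refine ⟨R⁻¹ • (b - a), ?_, (smul_inv_smul₀ hR.ne' _).symm⟩
    rw [norm_smul, ← dist_eq_norm, dist_comm, hab, norm_inv, Real.norm_of_nonneg hR.le,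
      inv_mul_cancel₀ hR.ne']
  have hmeas : MeasurableSet (closedBall 0 r ∩ closedBall (R • u) R) :=
    measurableSet_closedBall.inter measurableSet_closedBall
  have hfin : volume (closedBall 0 r ∩ closedBall (R • u) R) ≠ ⊤ :=
    measure_inter_ne_top_of_left_ne_top measure_closedBall_lt_top.ne
  rw [measureReal_closedBall_inter_closedBall_sub, hba,
    volume_real_solid_of_revolution hu hmeas hfin hr.le
      (smul_add_orthogonal_mem_lens_iff hu hr.le hR.le) (lensProfile_nonneg_iff hr hrR)]
  exact integral_comp_lensProfile
    ((continuous_euclideanBallVolume _).comp Real.continuous_sqrt) hr hrR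

end

theorem lens_volume_slicing (d : ℕ) (hd : 0 < d) (r R : ℝ) (hr : 0 < r) (hrR : r ≤ R) :
    (volume (closedBall (0 : EuclideanSpace ℝ (Fin d)) r ∩
        closedBall (EuclideanSpace.single (⟨0, hd⟩ : Fin d) R) R)).toReal =
      (∫ x in (0 : ℝ)..(r ^ 2 / (2 * R)),
          Real.pi ^ (((d : ℝ) - 1) / 2) * Real.sqrt (2 * R * x - x ^ 2) ^ (d - 1) /
            Real.Gamma (((d : ℝ) + 1) / 2)) +
      ∫ x in (r ^ 2 / (2 * R))..r,
          Real.pi ^ (((d : ℝ) - 1) / 2) * Real.sqrt (r ^ 2 - x ^ 2) ^ (d - 1) /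
            Real.Gamma (((d : ℝ) + 1) / 2) := by
  have hR : 0 < R := hr.trans_le hrR
  have hdist : dist 0 (EuclideanSpace.single (⟨0, hd⟩ : Fin d) R) = R := by
    simp [abs_of_pos hR]
  simpa only [measureReal_def, finrank_euclideanSpace_fin, euclideanBallVolume_pred hd] using
    lens_volume_slicing_general hdist hr (by linarith)
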